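/- Let E₁ and E₂ be Polish spaces, let Q(de₂|e₁) be a Borel measurable Markov kernel from E₁ to E₂, and let g : E₁ × E₂ → [0,∞) be a bounded lower semi-analytic function. Then the function f(e₁) = ∫ g(e₁,e₂) Q(de₂|e₁) is lower semi-analytic on E₁. -/

import Mathlib

open MeasureTheory ProbabilityTheory

/-!
If `F` is a continuous map on the Baire space `ℕ → ℕ`, the compact sets `F '' Iic n` exhaust
`range F` in measure, for every finite measure, and `{(n, y) | y ∈ F '' Iic n}` is closed. Hence,
for a finite kernel `κ` and an analytic set `A = range F`, the function `e ↦ κ e A` is the supremum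
over `n` of `κ e (F '' Iic n)`, which is Borel in `(e, n)`; its superlevel sets are projections
of Borel sets and therefore analytic. Dually `e ↦ κ e Aᶜ` is an infimum of Borel functions,
and both facts extend to s-finite kernels by monotone limits.

The integral of `g` is the area above the axis and under the graph of `g` minus the area below the
axis and above the graph, measured by the product of the kernel with Lebesgue measure. For lower
semi-analytic `g` the second region is analytic and the first has analytic complement. A function
on `E₁ × E₂` is integrated in this way against the kernel `e₁ ↦ δ_{e₁} ⊗ Q e₁`.
-/

open Set Filter Topology TopologicalSpace
open scoped ENNReal

section AnalyticSets

variable {X : Type*} [TopologicalSpace X] {s t : Set X}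

theorem analyticSet_union (hs : AnalyticSet s) (ht : AnalyticSet t) : AnalyticSet (s ∪ t) := by
  rw [union_eq_iUnion]
  exact .iUnion (Bool.forall_bool.2 ⟨ht, hs⟩)

theorem analyticSet_inter [T2Space X] (hs : AnalyticSet s) (ht : AnalyticSet t) :
    AnalyticSet (s ∩ t) := by
  rw [inter_eq_iInter]
  exact .iInter (Bool.forall_bool.2 ⟨ht, hs⟩)

end AnalyticSets

/-- Lower semi-analyticity of a function valued in an arbitrary order: all strict sublevel sets
are analytic. -/
def LowerSemianalytic {X α : Type*} [TopologicalSpace X] [LT α] (u : X → α) : Prop :=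
  ∀ c, AnalyticSet {x | u x < c}

/-- Upper semi-analyticity of a function valued in an arbitrary order: all strict superlevel sets
are analytic. -/
def UpperSemianalytic {X α : Type*} [TopologicalSpace X] [LT α] (u : X → α) : Prop :=
  ∀ c, AnalyticSet {x | c < u x}

section Semianalytic

variable {X Y α : Type*} [TopologicalSpace X] [TopologicalSpace Y]

theorem LowerSemianalytic.comp_continuous [PolishSpace X] [T2Space Y] [LT α] {u : Y → α}
    (hu : LowerSemianalytic u) {φ : X → Y} (hφ : Continuous φ) : LowerSemianalytic (u ∘ φ) :=
  fun c => (hu c).preimage hφ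

theorem upperSemianalytic_iSup {ι : Type*} [Countable ι] [CompleteLinearOrder α]
    {u : ι → X → α} (hu : ∀ i, UpperSemianalytic (u i)) :
    UpperSemianalytic fun x => ⨆ i, u i x := by
  intro c
  simp only [lt_iSup_iff, ofPred_exists]
  exact .iUnion fun i => hu i c

section Order

variable [LinearOrder α] [TopologicalSpace α] [OrderTopology α]

theorem upperSemianalytic_of_measurable [PolishSpace X] [MeasurableSpace X] [BorelSpace X]
    [MeasurableSpace α] [OpensMeasurableSpace α] {u : X → α} (hu : Measurable u) :
    UpperSemianalytic u :=
  fun _ => (hu measurableSet_Ioi).analyticSet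

variable [DenselyOrdered α] [SeparableSpace α]

theorem analyticSet_lt [T2Space X] {u v : X → α} (hu : LowerSemianalytic u)
    (hv : UpperSemianalytic v) : AnalyticSet {x | u x < v x} := by
  obtain ⟨D, hD_countable, hD⟩ := exists_countable_dense α
  have : Countable D := hD_countable
  have h_eq : {x | u x < v x} = ⋃ d : D, {x | u x < d} ∩ {x | d < v x} := by
    ext x
    simp only [mem_ofPred_eq, mem_iUnion, mem_inter_iff, Subtype.exists, exists_prop]
    exact ⟨fun h => hD.exists_between h, fun ⟨_, _, hud, hdv⟩ => hud.trans hdv⟩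
  rw [h_eq]
  exact .iUnion fun d => analyticSet_inter (hu d) (hv d)

theorem analyticSet_le [PolishSpace X] [MeasurableSpace X] [BorelSpace X] [Nonempty α]
    [MeasurableSpace α] [OpensMeasurableSpace α] {u v : X → α} (hu : LowerSemianalytic u)
    (hv : Measurable v) : AnalyticSet {x | u x ≤ v x} := by
  obtain ⟨D, hD_countable, hD⟩ := exists_countable_dense α
  have : Countable D := hD_countable
  have : Nonempty D := hD.nonempty.to_subtype
  have h_eq : {x | u x ≤ v x} = ⋂ d : D, {x | u x < d} ∪ {x | d ≤ v x} := by
    ext x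
    simp only [mem_ofPred_eq, mem_iInter, mem_union, Subtype.forall]
    refine ⟨fun h d _ => lt_or_ge (u x) d |>.imp_right h.trans', fun h => ?_⟩
    by_contra! hvu
    obtain ⟨d, hdD, hvd, hdu⟩ := hD.exists_between hvu
    exact (h d hdD).elim hdu.not_gt hvd.not_ge
  rw [h_eq]
  exact .iInter fun d => analyticSet_union (hu d) (hv measurableSet_Ici).analyticSet

end Order

theorem lowerSemianalytic_iSup {ι : Type*} [Countable ι] [Nonempty ι] [PolishSpace X]
    [CompleteLinearOrder α] [TopologicalSpace α] [OrderTopology α] [DenselyOrdered α]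
    [SeparableSpace α] {u : ι → X → α} (hu : ∀ i, LowerSemianalytic (u i)) :
    LowerSemianalytic fun x => ⨆ i, u i x := by
  borelize X α
  intro c
  obtain ⟨D, hD_countable, hD⟩ := exists_countable_dense α
  have : Countable ↑(D ∩ Iio c) := hD_countable.mono inter_subset_left
  have h_eq : {x | ⨆ i, u i x < c} = ⋃ d : ↑(D ∩ Iio c), ⋂ i, {x | u i x ≤ d} := by
    ext x
    simp only [mem_ofPred_eq, mem_iUnion, mem_iInter, Subtype.exists, exists_prop, ← iSup_le_iff]
    refine ⟨fun h => ?_, fun ⟨_, hd, h⟩ => h.trans_lt hd.2⟩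
    obtain ⟨d, hdD, hud, hdc⟩ := hD.exists_between h
    exact ⟨d, ⟨hdD, hdc⟩, hud.le⟩
  rw [h_eq]
  exact .iUnion fun d => .iInter fun i => analyticSet_le (hu i) measurable_const

section Projection

variable {Z : Type*} [PolishSpace X] [MeasurableSpace X] [BorelSpace X]
  [TopologicalSpace Z] [PolishSpace Z] [MeasurableSpace Z] [BorelSpace Z]
  [CompleteLinearOrder α] [TopologicalSpace α] [OrderTopology α] [MeasurableSpace α]
  [OpensMeasurableSpace α] {h : X × Z → α}

theorem upperSemianalytic_iSup_of_measurable (hh : Measurable h) :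
    UpperSemianalytic fun x => ⨆ z, h (x, z) := by
  intro c
  have h_eq : {x | c < ⨆ z, h (x, z)} = Prod.fst '' {p | c < h p} := by
    ext x; simp [lt_iSup_iff]
  rw [h_eq]
  exact (hh measurableSet_Ioi).analyticSet.image_of_continuous continuous_fst

theorem lowerSemianalytic_iInf_of_measurable (hh : Measurable h) :
    LowerSemianalytic fun x => ⨅ z, h (x, z) :=
  upperSemianalytic_iSup_of_measurable (α := αᵒᵈ) hh

end Projection

end Semianalytic

section CompactApproximation

theorem exists_mem_pi_nhds_of_forall_eventually_mem {ι : Type*} {π : ι → Type*}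
    [∀ i, TopologicalSpace (π i)] {K : ∀ i, Set (π i)} (hK : ∀ i, IsCompact (K i))
    (l : Ultrafilter (∀ i, π i)) (hl : ∀ i, ∀ᶠ x in (l : Filter (∀ i, π i)), x i ∈ K i) :
    ∃ z ∈ univ.pi K, ↑l ≤ 𝓝 z := by
  choose z hzK hz using fun i => (hK i).ultrafilter_le_nhds' (l.map (Function.eval i)) (hl i)
  exact ⟨z, fun i _ => hzK i, by rw [nhds_pi]; exact le_pi.2 hz⟩

/-- The set of integer sequences whose first `k` terms are bounded by those of `n`. These sets
decrease to the compact set `Set.Iic n` as `k` grows. -/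
def boundedCylinder (n : ℕ → ℕ) (k : ℕ) : Set (ℕ → ℕ) :=
  {x | ∀ i < k, x i ≤ n i}

theorem boundedCylinder_zero (n : ℕ → ℕ) : boundedCylinder n 0 = univ := by
  simp [boundedCylinder]

theorem boundedCylinder_succ (n : ℕ → ℕ) (k : ℕ) :
    boundedCylinder n (k + 1) = boundedCylinder n k ∩ {x | x k ≤ n k} := by
  ext x
  simp only [boundedCylinder, mem_inter_iff, mem_ofPred_eq, Nat.forall_lt_succ_right]

theorem antitone_boundedCylinder (n : ℕ → ℕ) : Antitone (boundedCylinder n) :=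
  fun _ _ hjk _ hx i hi => hx i (hi.trans_le hjk)

variable {X : Type*} {F : (ℕ → ℕ) → X}

section Topology

variable [TopologicalSpace X] [T2Space X]

theorem isClosed_setOf_mem_image_Iic (hF : Continuous F) :
    IsClosed {p : (ℕ → ℕ) × X | p.2 ∈ F '' Iic p.1} := by
  have h_eq : {p : (ℕ → ℕ) × X | p.2 ∈ F '' Iic p.1} =
      Prod.map id F '' {q : (ℕ → ℕ) × (ℕ → ℕ) | q.2 ≤ q.1} := by
    ext ⟨n, y⟩; simp
  rw [h_eq, isClosed_iff_ultrafilter]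
  rintro ⟨n, y⟩ l hl h_mem
  set m := Ultrafilter.ofComapInfPrincipal h_mem
  have hm : Tendsto (Prod.map id F) m (𝓝 (n, y)) := by
    rw [← Ultrafilter.ofComapInfPrincipal_eq_of_map h_mem] at hl
    exact hl
  have h_fst : Tendsto Prod.fst (m : Filter ((ℕ → ℕ) × (ℕ → ℕ))) (𝓝 n) :=
    (continuous_fst.tendsto (n, y)).comp hm
  have h_snd : Tendsto (fun q => F q.2) (m : Filter ((ℕ → ℕ) × (ℕ → ℕ))) (𝓝 y) :=
    (continuous_snd.tendsto (n, y)).comp hm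
  have h_bdd : ∀ i, ∀ᶠ x in (m.map Prod.snd : Filter (ℕ → ℕ)), x i ∈ Iic (n i) := fun i => by
    have h_const : ∀ᶠ q in (m : Filter ((ℕ → ℕ) × (ℕ → ℕ))), q.1 i = n i :=
      (tendsto_pi_nhds.1 h_fst i).eventually_mem (mem_nhds_discrete.2 (mem_singleton (n i)))
    have h_le : ∀ᶠ q in (m : Filter ((ℕ → ℕ) × (ℕ → ℕ))), q.2 ≤ q.1 :=
      Ultrafilter.ofComapInfPrincipal_mem h_mem
    exact h_const.mp (h_le.mono fun q hq hqi => (hq i).trans_eq hqi)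
  obtain ⟨z, hzn, hz⟩ := exists_mem_pi_nhds_of_forall_eventually_mem
    (fun i => (finite_Iic (n i)).isCompact) _ h_bdd
  exact ⟨(n, z), fun i => hzn i trivial,
    Prod.ext rfl (tendsto_nhds_unique ((hF.tendsto z).comp hz) h_snd)⟩

theorem iInter_closure_image_boundedCylinder_subset (hF : Continuous F) (n : ℕ → ℕ) :
    ⋂ k, closure (F '' boundedCylinder n k) ⊆ F '' Iic n := by
  intro y hy
  have h_basis : (⨅ k, 𝓟 (boundedCylinder n k)).HasBasis (fun _ => True) (boundedCylinder n) :=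
    hasBasis_iInf_principal (antitone_boundedCylinder n).directed_ge
  have h_cluster : MapClusterPt y (⨅ k, 𝓟 (boundedCylinder n k)) F := by
    refine mapClusterPt_iff_frequently.2 fun U hU => h_basis.frequently_iff.2 fun {k} _ => ?_
    obtain ⟨_, hU, x, hx, rfl⟩ := mem_closure_iff_nhds.1 (mem_iInter.1 hy k) U hU
    exact ⟨x, hx, hU⟩
  obtain ⟨l, hl, hly⟩ := mapClusterPt_iff_ultrafilter.1 h_cluster
  have h_le : ∀ i, ∀ᶠ x in (l : Filter (ℕ → ℕ)), x i ∈ Iic (n i) := fun i => by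
    filter_upwards [hl (h_basis.mem_of_mem (i := i + 1) trivial)] with x hx
    exact hx i i.lt_succ_self
  obtain ⟨z, hzn, hz⟩ := exists_mem_pi_nhds_of_forall_eventually_mem
    (fun i => (finite_Iic (n i)).isCompact) l h_le
  exact ⟨z, fun i => hzn i trivial, tendsto_nhds_unique ((hF.tendsto z).comp hz) hly⟩

end Topology

variable [MeasurableSpace X]

theorem exists_lt_measure_image_inter_le (F : (ℕ → ℕ) → X) (μ : Measure X) {r : ℝ≥0∞}
    {S : Set (ℕ → ℕ)} (hS : r < μ (F '' S)) (k : ℕ) :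
    ∃ m, r < μ (F '' (S ∩ {x | x k ≤ m})) := by
  have h_mono : Monotone fun m : ℕ => F '' (S ∩ {x | x k ≤ m}) := fun _ _ hab =>
    image_mono (inter_subset_inter_right S fun _ hx => le_trans hx hab)
  have h_iUnion : ⋃ m : ℕ, F '' (S ∩ {x | x k ≤ m}) = F '' S := by
    rw [← image_iUnion, ← inter_iUnion, inter_eq_left.2]
    exact fun x _ => mem_iUnion.2 ⟨x k, le_refl (x k)⟩
  rwa [← h_iUnion, h_mono.measure_iUnion, lt_iSup_iff] at hS

theorem exists_forall_lt_measure_image_boundedCylinder (F : (ℕ → ℕ) → X) (μ : Measure X)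
    {r : ℝ≥0∞} (hr : r < μ (range F)) : ∃ n, ∀ k, r < μ (F '' boundedCylinder n k) := by
  choose! m hm using fun (k : ℕ) (S : Set (ℕ → ℕ)) (hS : r < μ (F '' S)) =>
    exists_lt_measure_image_inter_le F μ hS k
  let S : ℕ → Set (ℕ → ℕ) := fun k => Nat.rec univ (fun k S => S ∩ {x | x k ≤ m k S}) k
  have hS_eq : ∀ k, S k = boundedCylinder (fun j => m j (S j)) k := by
    intro k
    induction k with
    | zero => exact (boundedCylinder_zero _).symm
    | succ k ih => rw [boundedCylinder_succ, ← ih]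
  have hS_lt : ∀ k, r < μ (F '' S k) := by
    intro k
    induction k with
    | zero => rwa [← image_univ] at hr
    | succ k ih => exact hm k (S k) ih
  exact ⟨_, fun k => hS_eq k ▸ hS_lt k⟩

variable [TopologicalSpace X] [T2Space X] [OpensMeasurableSpace X]

theorem iSup_measure_image_Iic (hF : Continuous F) (μ : Measure X) [IsFiniteMeasure μ] :
    ⨆ n, μ (F '' Iic n) = μ (range F) := by
  refine le_antisymm (iSup_le fun n => measure_mono (image_subset_range F _))
    (le_of_forall_lt fun r hr => ?_)
  obtain ⟨r', hrr', hr'⟩ := exists_between hr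
  obtain ⟨n, hn⟩ := exists_forall_lt_measure_image_boundedCylinder F μ hr'
  have h_anti : Antitone fun k => closure (F '' boundedCylinder n k) := fun _ _ hjk =>
    closure_mono (image_mono (antitone_boundedCylinder n hjk))
  calc
    r < r' := hrr'
    _ ≤ ⨅ k, μ (closure (F '' boundedCylinder n k)) :=
      le_iInf fun k => (hn k).le.trans (measure_mono subset_closure)
    _ = μ (⋂ k, closure (F '' boundedCylinder n k)) :=
      (h_anti.measure_iInter (fun _ => isClosed_closure.nullMeasurableSet)
        ⟨0, measure_ne_top _ _⟩).symm
    _ ≤ μ (F '' Iic n) := measure_mono (iInter_closure_image_boundedCylinder_subset hF n)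
    _ ≤ ⨆ n, μ (F '' Iic n) := le_iSup (fun n => μ (F '' Iic n)) n

theorem measurableSet_image_Iic (hF : Continuous F) (n : ℕ → ℕ) : MeasurableSet (F '' Iic n) := by
  have h_compact : IsCompact (Iic n) := by
    rw [← pi_univ_Iic]
    exact isCompact_univ_pi fun i => (finite_Iic (n i)).isCompact
  exact (h_compact.image hF).measurableSet

theorem nullMeasurableSet_range_of_continuous (hF : Continuous F) (μ : Measure X)
    [IsFiniteMeasure μ] : NullMeasurableSet (range F) μ := by
  obtain ⟨u, -, hu_lim, hu_mem⟩ :=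
    exists_seq_tendsto_sSup (range_nonempty fun n => μ (F '' Iic n)) (OrderTop.bddAbove _)
  choose n hn using hu_mem
  rw [sSup_range, iSup_measure_image_Iic hF] at hu_lim
  have h_meas : MeasurableSet (⋃ k, F '' Iic (n k)) :=
    .iUnion fun k => measurableSet_image_Iic hF (n k)
  have h_subset : ⋃ k, F '' Iic (n k) ⊆ range F := iUnion_subset fun k => image_subset_range F _
  have h_le : μ (range F) ≤ μ (⋃ k, F '' Iic (n k)) :=
    le_of_tendsto' hu_lim fun k =>
      (hn k).symm.trans_le (measure_mono (subset_iUnion (fun k => F '' Iic (n k)) k))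
  exact h_meas.nullMeasurableSet.congr (ae_eq_of_subset_of_measure_ge h_subset h_le
    h_meas.nullMeasurableSet (measure_ne_top _ _))

theorem nullMeasurableSet_of_analyticSet (μ : Measure X) [SFinite μ] {A : Set X}
    (hA : AnalyticSet A) : NullMeasurableSet A μ := by
  rw [AnalyticSet] at hA
  obtain rfl | ⟨F, hF, rfl⟩ := hA
  · exact .empty
  · exact (nullMeasurableSet_range_of_continuous hF μ.toFinite).mono_ac
      (absolutelyContinuous_toFinite μ)

theorem iInf_measure_compl_image_Iic (hF : Continuous F) (μ : Measure X) [IsFiniteMeasure μ] :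
    ⨅ n, μ (F '' Iic n)ᶜ = μ (range F)ᶜ := by
  rw [measure_compl₀ (nullMeasurableSet_range_of_continuous hF μ) (measure_ne_top _ _),
    ← iSup_measure_image_Iic hF, ENNReal.sub_iSup (measure_ne_top _ _)]
  exact iInf_congr fun n => measure_compl (measurableSet_image_Iic hF n) (measure_ne_top _ _)

end CompactApproximation

theorem LowerSemianalytic.aemeasurable {X α : Type*} [TopologicalSpace X] [T2Space X]
    [MeasurableSpace X] [OpensMeasurableSpace X] [LinearOrder α] [TopologicalSpace α]
    [OrderTopology α] [SecondCountableTopology α] [MeasurableSpace α] [BorelSpace α]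
    {u : X → α} (hu : LowerSemianalytic u) (μ : Measure X) [SFinite μ] : AEMeasurable u μ :=
  NullMeasurable.aemeasurable <|
    measurable_of_Iio (δ := NullMeasurableSpace X μ) fun c =>
      nullMeasurableSet_of_analyticSet μ (hu c)

section KernelApply

section Measurable

variable {E X Z : Type*} [MeasurableSpace E] [MeasurableSpace X] [MeasurableSpace Z]
  (κ : Kernel E X) [IsSFiniteKernel κ]

theorem measurable_kernel_apply_preimage_prodMk {s : Set (Z × X)} (hs : MeasurableSet s) :
    Measurable fun p : E × Z => κ p.1 (Prod.mk p.2 ⁻¹' s) :=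
  Kernel.measurable_kernel_prodMk_left (κ := κ.comap Prod.fst measurable_fst)
    (hs.preimage (measurable_fst.snd.prodMk measurable_snd))

theorem exists_finiteKernel_seq_iSup_apply : ∃ η : ℕ → Kernel E X, (∀ N, IsFiniteKernel (η N)) ∧
    ∀ e (s : Set X), κ e s = ⨆ N, η N e s := by
  refine ⟨fun N => ∑ i ∈ Finset.range N, κ.seq i, fun N => ?_, fun e s => ?_⟩
  · induction N with
    | zero => exact isFiniteKernel_zero E X
    | succ N ih => simp only [Finset.sum_range_succ]; infer_instance
  · simp only [Kernel.finsetSum_apply']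
    rw [← ENNReal.tsum_eq_iSup_nat, ← Measure.sum_apply_of_countable, κ.measure_sum_seq]

theorem kernel_prod_volume_regionBetween (e : E) {f g : X → ℝ} (hf : AEMeasurable f (κ e))
    (hg : AEMeasurable g (κ e)) :
    (κ ×ₖ Kernel.const E (volume : Measure ℝ)) e (regionBetween f g univ) =
      ∫⁻ x, ENNReal.ofReal (g x - f x) ∂κ e := by
  rw [← Measure.restrict_univ (μ := κ e)] at hf hg
  simpa only [Kernel.prod_apply, Kernel.const_apply, Measure.restrict_univ, Pi.sub_apply] using
    volume_regionBetween_eq_lintegral hf hg .univ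

end Measurable

variable {E X : Type*} [TopologicalSpace E] [PolishSpace E] [MeasurableSpace E] [BorelSpace E]
  [TopologicalSpace X] [T2Space X] [SecondCountableTopology X] [MeasurableSpace X]
  [OpensMeasurableSpace X]

theorem upperSemianalytic_finiteKernel_apply (κ : Kernel E X) [IsFiniteKernel κ] {A : Set X}
    (hA : AnalyticSet A) : UpperSemianalytic fun e => κ e A := by
  rw [AnalyticSet] at hA
  obtain rfl | ⟨F, hF, rfl⟩ := hA
  · exact upperSemianalytic_of_measurable (κ.measurable_coe .empty)
  · simp only [← iSup_measure_image_Iic hF]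
    exact upperSemianalytic_iSup_of_measurable <|
      measurable_kernel_apply_preimage_prodMk κ (isClosed_setOf_mem_image_Iic hF).measurableSet

theorem lowerSemianalytic_finiteKernel_apply_compl (κ : Kernel E X) [IsFiniteKernel κ]
    {A : Set X} (hA : AnalyticSet A) : LowerSemianalytic fun e => κ e Aᶜ := by
  rw [AnalyticSet] at hA
  obtain rfl | ⟨F, hF, rfl⟩ := hA
  · exact fun c => (κ.measurable_coe MeasurableSet.empty.compl measurableSet_Iio).analyticSet
  · simp only [← iInf_measure_compl_image_Iic hF]
    exact lowerSemianalytic_iInf_of_measurable <|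
      measurable_kernel_apply_preimage_prodMk κ
        (isClosed_setOf_mem_image_Iic hF).measurableSet.compl

theorem upperSemianalytic_kernel_apply (κ : Kernel E X) [IsSFiniteKernel κ] {A : Set X}
    (hA : AnalyticSet A) : UpperSemianalytic fun e => κ e A := by
  obtain ⟨η, _, hη⟩ := exists_finiteKernel_seq_iSup_apply κ
  simp only [hη]
  exact upperSemianalytic_iSup fun N => upperSemianalytic_finiteKernel_apply (η N) hA

theorem lowerSemianalytic_kernel_apply_compl (κ : Kernel E X) [IsSFiniteKernel κ] {A : Set X}
    (hA : AnalyticSet A) : LowerSemianalytic fun e => κ e Aᶜ := by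
  obtain ⟨η, _, hη⟩ := exists_finiteKernel_seq_iSup_apply κ
  simp only [hη]
  exact lowerSemianalytic_iSup fun N => lowerSemianalytic_finiteKernel_apply_compl (η N) hA

end KernelApply

section Integral

section RealValued

variable {X : Type*} [TopologicalSpace X]

theorem LowerSemianalytic.toReal {u : X → ℝ≥0∞} (hu : LowerSemianalytic u)
    (hu_top : ∀ x, u x ≠ ∞) : LowerSemianalytic fun x => (u x).toReal := by
  intro c
  simp only [← ENNReal.lt_ofReal_iff_toReal_lt (hu_top _)]
  exact hu _

theorem UpperSemianalytic.toReal [PolishSpace X] {u : X → ℝ≥0∞} (hu : UpperSemianalytic u)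
    (hu_top : ∀ x, u x ≠ ∞) : UpperSemianalytic fun x => (u x).toReal := by
  intro c
  obtain hc | hc := lt_or_ge c 0
  · have h_univ : {x | c < (u x).toReal} = univ :=
      eq_univ_of_forall fun x => hc.trans_le ENNReal.toReal_nonneg
    exact h_univ ▸ isClosed_univ.analyticSet
  · simp only [← ENNReal.ofReal_lt_iff_lt_toReal hc (hu_top _)]
    exact hu _

theorem LowerSemianalytic.sub [T2Space X] {u v : X → ℝ} (hu : LowerSemianalytic u)
    (hv : UpperSemianalytic v) : LowerSemianalytic fun x => u x - v x := by
  intro c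
  have hcv : UpperSemianalytic fun x => c + v x := fun d => by
    simpa only [sub_lt_iff_lt_add'] using hv (d - c)
  simpa only [sub_lt_iff_lt_add] using analyticSet_lt hu hcv

end RealValued

variable {E X : Type*} [TopologicalSpace E] [PolishSpace E] [MeasurableSpace E] [BorelSpace E]
  [TopologicalSpace X] [PolishSpace X] [MeasurableSpace X] [BorelSpace X] {g : X → ℝ}

theorem analyticSet_regionBetween_zero (hg : LowerSemianalytic g) :
    AnalyticSet (regionBetween g 0 univ) := by
  have h_eq : regionBetween g 0 univ =
      {p : X × ℝ | g p.1 < p.2} ∩ {p | p.2 < 0} := by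
    ext p; simp [regionBetween]
  rw [h_eq]
  exact analyticSet_inter
    (analyticSet_lt (hg.comp_continuous continuous_fst)
      (upperSemianalytic_of_measurable measurable_snd))
    (measurableSet_lt measurable_snd measurable_const).analyticSet

theorem analyticSet_compl_regionBetween_zero (hg : LowerSemianalytic g) :
    AnalyticSet (regionBetween 0 g univ)ᶜ := by
  have h_eq : (regionBetween 0 g univ)ᶜ =
      {p : X × ℝ | p.2 ≤ 0} ∪ {p | g p.1 ≤ p.2} := by
    ext p; simp [regionBetween, imp_iff_not_or]
  rw [h_eq]
  exact analyticSet_union (measurableSet_le measurable_snd measurable_const).analyticSet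
    (analyticSet_le (hg.comp_continuous continuous_fst) measurable_snd)

variable (κ : Kernel E X) [IsSFiniteKernel κ]

theorem LowerSemianalytic.lintegral_ofReal (hg : LowerSemianalytic g) :
    LowerSemianalytic fun e => ∫⁻ x, ENNReal.ofReal (g x) ∂κ e := by
  have h_region : ∀ e, (κ ×ₖ Kernel.const E (volume : Measure ℝ)) e (regionBetween 0 g univ) =
      ∫⁻ x, ENNReal.ofReal (g x) ∂κ e := fun e => by
    simpa only [Pi.zero_apply, sub_zero] using
      kernel_prod_volume_regionBetween κ e (f := 0) aemeasurable_zero (hg.aemeasurable (κ e))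
  simpa only [compl_compl, h_region] using
    lowerSemianalytic_kernel_apply_compl (κ ×ₖ Kernel.const E volume)
      (analyticSet_compl_regionBetween_zero hg)

theorem LowerSemianalytic.lintegral_ofReal_neg (hg : LowerSemianalytic g) :
    UpperSemianalytic fun e => ∫⁻ x, ENNReal.ofReal (-g x) ∂κ e := by
  have h_region : ∀ e, (κ ×ₖ Kernel.const E (volume : Measure ℝ)) e (regionBetween g 0 univ) =
      ∫⁻ x, ENNReal.ofReal (-g x) ∂κ e := fun e => by
    simpa only [Pi.zero_apply, zero_sub] using
      kernel_prod_volume_regionBetween κ e (g := 0) (hg.aemeasurable (κ e)) aemeasurable_zero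
  simpa only [h_region] using
    upperSemianalytic_kernel_apply (κ ×ₖ Kernel.const E volume) (analyticSet_regionBetween_zero hg)

theorem LowerSemianalytic.integral_kernel (hg : LowerSemianalytic g)
    (hg_int : ∀ e, Integrable g (κ e)) : LowerSemianalytic fun e => ∫ x, g x ∂κ e := by
  simp only [integral_eq_lintegral_pos_part_sub_lintegral_neg_part (hg_int _)]
  exact ((hg.lintegral_ofReal κ).toReal fun e => (hg_int e).lintegral_lt_top.ne).sub
    ((hg.lintegral_ofReal_neg κ).toReal fun e => (hg_int e).neg.lintegral_lt_top.ne)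

end Integral

theorem lower_semianalytic_integral_kernel_general
    {E₁ E₂ : Type*}
    [TopologicalSpace E₁] [PolishSpace E₁] [MeasurableSpace E₁] [BorelSpace E₁]
    [TopologicalSpace E₂] [PolishSpace E₂] [MeasurableSpace E₂] [BorelSpace E₂]
    (Q : Kernel E₁ E₂) [IsSFiniteKernel Q] {g : E₁ × E₂ → ℝ} (hg : LowerSemianalytic g)
    (hg_int : ∀ e₁, Integrable (fun e₂ => g (e₁, e₂)) (Q e₁)) :
    LowerSemianalytic fun e₁ => ∫ e₂, g (e₁, e₂) ∂Q e₁ := by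
  have h_graph : ∀ e₁, (Kernel.id ×ₖ Q) e₁ = (Q e₁).map (Prod.mk e₁) := fun e₁ => by
    rw [Kernel.prod_apply, Kernel.id_apply, Measure.dirac_prod]
  have h_int : ∀ e₁, Integrable g ((Kernel.id ×ₖ Q) e₁) := fun e₁ => by
    rw [h_graph, (measurableEmbedding_prodMk_left e₁).integrable_map_iff]
    exact hg_int e₁
  simpa only [h_graph, (measurableEmbedding_prodMk_left _).integral_map] using
    hg.integral_kernel (Kernel.id ×ₖ Q) h_int

/-- Let `E₁`, `E₂` be Polish spaces, `Q` a Borel measurable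
Markov kernel from `E₁` to `E₂`, and `g : E₁ × E₂ → [0,∞)` a bounded lower
semi-analytic function.  Then `f e₁ = ∫ g (e₁, e₂) Q(de₂|e₁)` is lower
semi-analytic on `E₁`. -/
theorem lower_semianalytic_integral_kernel
    {E₁ E₂ : Type*}
    [TopologicalSpace E₁] [PolishSpace E₁] [MeasurableSpace E₁] [BorelSpace E₁]
    [TopologicalSpace E₂] [PolishSpace E₂] [MeasurableSpace E₂] [BorelSpace E₂]
    (Q : Kernel E₁ E₂) [IsMarkovKernel Q]
    (g : E₁ × E₂ → ℝ)
    (hg_nonneg : ∀ p, 0 ≤ g p)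
    (hg_bdd : ∃ C : ℝ, ∀ p, g p ≤ C)
    (hg_lsa : ∀ c : ℝ, MeasureTheory.AnalyticSet {p : E₁ × E₂ | g p < c})
    (f : E₁ → ℝ)
    (hf : ∀ e₁, f e₁ = ∫ e₂, g (e₁, e₂) ∂(Q e₁)) :
    ∀ c : ℝ, MeasureTheory.AnalyticSet {e₁ : E₁ | f e₁ < c} := by
  obtain ⟨C, hC⟩ := hg_bdd
  have hg : LowerSemianalytic g := hg_lsa
  have h_bound : ∀ p, ‖g p‖ ≤ C := fun p => (Real.norm_of_nonneg (hg_nonneg p)).trans_le (hC p)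
  have hg_int : ∀ e₁, Integrable (fun e₂ => g (e₁, e₂)) (Q e₁) := fun e₁ =>
    .of_bound ((hg.comp_continuous (.prodMk_right e₁)).aemeasurable _).aestronglyMeasurable C
      (.of_forall fun _ => h_bound _)
  simpa only [hf] using! lower_semianalytic_integral_kernel_general Q hg hg_int
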